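/- Let R be a commutative ring in which 2 is invertible, and let n ≥ 2. Every matrix in UT_n(R) (n×n unitriangular matrices over R) is a product of at most two commutators of involutions: A = [B₁,C₁]·[B₂,C₂] with B₁,C₁,B₂,C₂ upper triangular matrices satisfying Bⱼ² = Cⱼ² = I. -/

import Mathlib

/-!
If `s * s = 1`, then `⁅s, w * s * w⁻¹⁆ = ⁅s, w⁆ * ⁅s, w⁆`, so the square of any commutator with an
involution is a commutator of two involutions. For `s = diag(1, -1, 1, …)` and `w` unitriangular
with superdiagonal `k`, conjugation by `s` negates the superdiagonal, so this square has
superdiagonal `-4 • k`. As `2` is invertible, every superdiagonal is therefore attained by a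
commutator of involutions.

Moreover, all unitriangular matrices with superdiagonal `(1, …, 1)` are conjugate to a single Jordan
block, so they are all commutators of involutions. Given `A`, choose such a commutator `X` whose
superdiagonal is that of `A` minus `1`; then `X⁻¹ * A` has superdiagonal `(1, …, 1)`.
-/

open scoped commutatorElement

section Group

variable {G : Type*} [Group G] {H : Subgroup G} {g h s w : G}

/-- The element `g` is a commutator of two elements of the subgroup `H` that square to `1`; as in
the theorem, the identity counts as an involution. -/
def IsInvolutionCommutator (H : Subgroup G) (g : G) : Prop :=
  ∃ b ∈ H, ∃ c ∈ H, b * b = 1 ∧ c * c = 1 ∧ g = ⁅b, c⁆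

lemma conj_mul_self_eq_one (hs : s * s = 1) (w : G) : w * s * w⁻¹ * (w * s * w⁻¹) = 1 := by
  rw [_root_.conj_mul, hs, mul_one, mul_inv_cancel]

lemma IsInvolutionCommutator.conj (hg : IsInvolutionCommutator H g) (hh : h ∈ H) :
    IsInvolutionCommutator H (h * g * h⁻¹) := by
  obtain ⟨b, hb, c, hc, hbb, hcc, rfl⟩ := hg
  exact ⟨h * b * h⁻¹, H.mul_mem (H.mul_mem hh hb) (H.inv_mem hh),
    h * c * h⁻¹, H.mul_mem (H.mul_mem hh hc) (H.inv_mem hh),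
    conj_mul_self_eq_one hbb h, conj_mul_self_eq_one hcc h, conjugate_commutatorElement b c h⟩

lemma commutatorElement_conj_self (hs : s * s = 1) (w : G) :
    ⁅s, w * s * w⁻¹⁆ = ⁅s, w⁆ * ⁅s, w⁆ := by
  have hs_inv : s⁻¹ = s := inv_eq_of_mul_eq_one_left hs
  simp only [commutatorElement_def, mul_inv_rev, inv_inv, hs_inv, mul_assoc]

lemma isInvolutionCommutator_commutatorElement_mul_self (hsH : s ∈ H) (hwH : w ∈ H)
    (hs : s * s = 1) : IsInvolutionCommutator H (⁅s, w⁆ * ⁅s, w⁆) :=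
  ⟨s, hsH, w * s * w⁻¹, H.mul_mem (H.mul_mem hwH hsH) (H.inv_mem hwH), hs,
    conj_mul_self_eq_one hs w, (commutatorElement_conj_self hs w).symm⟩

end Group

open Matrix

section Filtration

variable {R : Type*} {n : ℕ}

/-- The filtration of the square matrices by their lowest nonzero diagonal: all entries of `M`
below the `k`-th diagonal above the main one vanish. For `k = 0` this is upper triangularity, for
`k = 1` strict upper triangularity. -/
def VanishesBelowDiagonal [Zero R] (k : ℕ) (M : Matrix (Fin n) (Fin n) R) : Prop :=
  ∀ ⦃i j : Fin n⦄, (j : ℕ) < i + k → M i j = 0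

lemma vanishesBelowDiagonal_zero_iff [Zero R] {M : Matrix (Fin n) (Fin n) R} :
    VanishesBelowDiagonal 0 M ↔ M.BlockTriangular id :=
  Iff.rfl

lemma vanishesBelowDiagonal_sub_one_iff [Ring R] {M : Matrix (Fin n) (Fin n) R} :
    VanishesBelowDiagonal 1 (M - 1) ↔ M.BlockTriangular id ∧ ∀ i, M i i = 1 := by
  refine ⟨fun hM ↦ ⟨fun i j hij ↦ ?_, fun i ↦ ?_⟩, fun ⟨hM, hdiag⟩ i j hij ↦ ?_⟩
  · have hij' : j < i := hij
    simpa [one_apply_ne hij'.ne'] using hM (show (j : ℕ) < i + 1 by lia)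
  · simpa [sub_eq_zero] using hM (Nat.lt_succ_self (i : ℕ))
  · obtain rfl | hlt := (show j ≤ i by lia).eq_or_lt
    · simp [hdiag]
    · simp [hM hlt, one_apply_ne hlt.ne']

namespace VanishesBelowDiagonal

variable {k l : ℕ}

lemma add [AddZeroClass R] {M N : Matrix (Fin n) (Fin n) R} (hM : VanishesBelowDiagonal k M)
    (hN : VanishesBelowDiagonal k N) : VanishesBelowDiagonal k (M + N) :=
  fun i j hij ↦ by rw [Matrix.add_apply, hM hij, hN hij, add_zero]

lemma mono [Zero R] {M : Matrix (Fin n) (Fin n) R} (hkl : k ≤ l)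
    (hM : VanishesBelowDiagonal l M) : VanishesBelowDiagonal k M :=
  fun _ _ hij ↦ hM (by lia)

variable [Semiring R] {M N : Matrix (Fin n) (Fin n) R}

lemma mul (hM : VanishesBelowDiagonal k M) (hN : VanishesBelowDiagonal l N) :
    VanishesBelowDiagonal (k + l) (M * N) := by
  intro i j hij
  refine (mul_apply ..).trans (Finset.sum_eq_zero fun p _ ↦ ?_)
  obtain hp | hp := lt_or_ge (p : ℕ) (i + k)
  · rw [hM hp, zero_mul]
  · rw [hN (by lia), mul_zero]

lemma mul_apply_of_eq_add (hM : VanishesBelowDiagonal k M) (hN : VanishesBelowDiagonal l N)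
    {i p j : Fin n} (hip : (p : ℕ) = i + k) (hpj : (j : ℕ) = p + l) :
    (M * N) i j = M i p * N p j := by
  refine (mul_apply ..).trans (Fintype.sum_eq_single p fun q hq ↦ ?_)
  obtain hlt | hgt := lt_or_gt_of_ne hq
  · rw [hM (by lia), zero_mul]
  · rw [hN (by lia), mul_zero]

lemma pow (hM : VanishesBelowDiagonal k M) (e : ℕ) : VanishesBelowDiagonal (e * k) (M ^ e) := by
  induction e with
  | zero => simpa [vanishesBelowDiagonal_zero_iff] using blockTriangular_one
  | succ e ih => simpa only [pow_succ, Nat.succ_mul] using ih.mul hM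

end VanishesBelowDiagonal

end Filtration

section Subgroups

variable {R : Type*} [CommRing R] {n : ℕ}

/-- The standard Borel subgroup of `GL (Fin n) R`: the invertible upper triangular matrices. -/
def upperTriangularSubgroup (n : ℕ) (R : Type*) [CommRing R] : Subgroup (GL (Fin n) R) where
  carrier := {g | (g : Matrix (Fin n) (Fin n) R).BlockTriangular id}
  one_mem' := blockTriangular_one
  mul_mem' hg hh := BlockTriangular.mul hg hh
  inv_mem' {g} hg := by
    simpa using blockTriangular_inv_of_blockTriangular hg

/-- The group `UT_n(R)` as a subgroup of `GL (Fin n) R`, encoded as the elements that differ from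
the identity by a strictly upper triangular matrix. -/
def unitriangularSubgroup (n : ℕ) (R : Type*) [CommRing R] : Subgroup (GL (Fin n) R) where
  carrier := {g | VanishesBelowDiagonal 1 (g - 1 : Matrix (Fin n) (Fin n) R)}
  one_mem' := by simp [VanishesBelowDiagonal]
  mul_mem' {g h} hg hh := by
    have hh_upper := (vanishesBelowDiagonal_sub_one_iff.mp hh).1
    have hsub : (g * h - 1 : Matrix (Fin n) (Fin n) R) = (g - 1) * h + (h - 1) := by noncomm_ring
    simpa only [Set.mem_ofPred_eq, Units.val_mul, hsub] using
      (hg.mul (vanishesBelowDiagonal_zero_iff.mpr hh_upper)).add hh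
  inv_mem' {g} hg := by
    have hg_upper : g⁻¹ ∈ upperTriangularSubgroup n R :=
      inv_mem (vanishesBelowDiagonal_sub_one_iff.mp hg).1
    have hsub : ((g⁻¹ : GL (Fin n) R) - 1 : Matrix (Fin n) (Fin n) R) =
        -(g⁻¹ : GL (Fin n) R) * (g - 1) := by
      rw [neg_mul, mul_sub, Units.inv_mul, mul_one, neg_sub]
    simpa only [Set.mem_ofPred_eq, hsub, Nat.zero_add] using
      (vanishesBelowDiagonal_zero_iff.mpr (BlockTriangular.neg hg_upper)).mul hg

lemma mem_unitriangularSubgroup_iff {g : GL (Fin n) R} :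
    g ∈ unitriangularSubgroup n R ↔
      VanishesBelowDiagonal 1 (g - 1 : Matrix (Fin n) (Fin n) R) :=
  Iff.rfl

lemma unitriangularSubgroup_le_upperTriangularSubgroup :
    unitriangularSubgroup n R ≤ upperTriangularSubgroup n R :=
  fun _ hg ↦ (vanishesBelowDiagonal_sub_one_iff.mp hg).1

lemma conj_mem_unitriangularSubgroup {g u : GL (Fin n) R} (hg : g ∈ upperTriangularSubgroup n R)
    (hu : u ∈ unitriangularSubgroup n R) : g * u * g⁻¹ ∈ unitriangularSubgroup n R := by
  have hsub : ((g * u * g⁻¹ : GL (Fin n) R) - 1 : Matrix (Fin n) (Fin n) R) =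
      g * (u - 1) * (g⁻¹ : GL (Fin n) R) := by
    rw [mul_sub, sub_mul, mul_one, Units.mul_inv, Units.val_mul, Units.val_mul]
  rw [mem_unitriangularSubgroup_iff, hsub]
  exact ((vanishesBelowDiagonal_zero_iff.mpr hg).mul hu).mul
    (vanishesBelowDiagonal_zero_iff.mpr (inv_mem hg)) |>.mono (by lia)

lemma VanishesBelowDiagonal.exists_mem_unitriangularSubgroup {M : Matrix (Fin n) (Fin n) R}
    (hM : VanishesBelowDiagonal 1 (M - 1)) : ∃ g ∈ unitriangularSubgroup n R, ↑g = M := by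
  obtain ⟨hupper, hdiag⟩ := vanishesBelowDiagonal_sub_one_iff.mp hM
  have hdet : M.det = 1 := by simp [det_of_isUpperTriangular hupper, hdiag]
  obtain ⟨g, rfl⟩ := (isUnit_iff_isUnit_det M).mpr (hdet ▸ isUnit_one)
  exact ⟨g, hM, rfl⟩

end Subgroups

section Superdiagonal

variable {R : Type*} {n : ℕ}

/-- The entries on the first diagonal above the main one. -/
def superdiagonal (M : Matrix (Fin (n + 1)) (Fin (n + 1)) R) : Fin n → R :=
  fun i ↦ M i.castSucc i.succ

/-- The matrix with superdiagonal `k` and all other entries zero; its column `0` vanishes and its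
column `j + 1` is `k j` times the `j`-th standard basis vector. -/
def superdiagonalMatrix [Zero R] (k : Fin n → R) : Matrix (Fin (n + 1)) (Fin (n + 1)) R :=
  of fun i ↦ Fin.cases 0 fun j ↦ if i = j.castSucc then k j else 0

lemma superdiagonal_one_add_superdiagonalMatrix [NonAssocSemiring R] (k : Fin n → R) :
    superdiagonal (1 + superdiagonalMatrix k) = k := by
  ext i
  simp [superdiagonal, superdiagonalMatrix, one_apply_ne Fin.castSucc_lt_succ.ne]

lemma vanishesBelowDiagonal_superdiagonalMatrix [Zero R] (k : Fin n → R) :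
    VanishesBelowDiagonal 1 (superdiagonalMatrix k) := by
  intro i j hij
  cases j using Fin.cases with
  | zero => rfl
  | succ j =>
    have hne : i ≠ j.castSucc := by
      rintro rfl
      simp at hij
    simp [superdiagonalMatrix, hne]

lemma mul_superdiagonalMatrix_apply_zero [NonUnitalNonAssocSemiring R]
    (M : Matrix (Fin (n + 1)) (Fin (n + 1)) R) (k : Fin n → R) (i : Fin (n + 1)) :
    (M * superdiagonalMatrix k) i 0 = 0 := by
  simp [mul_apply, superdiagonalMatrix]

lemma mul_superdiagonalMatrix_apply_succ [NonUnitalNonAssocSemiring R]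
    (M : Matrix (Fin (n + 1)) (Fin (n + 1)) R) (k : Fin n → R) (i : Fin (n + 1)) (j : Fin n) :
    (M * superdiagonalMatrix k) i j.succ = M i j.castSucc * k j := by
  simp [mul_apply, superdiagonalMatrix]

lemma superdiagonal_one [Zero R] [One R] :
    superdiagonal (1 : Matrix (Fin (n + 1)) (Fin (n + 1)) R) = 0 := by
  ext i
  exact one_apply_ne Fin.castSucc_lt_succ.ne

lemma superdiagonal_sub_one [Ring R] (M : Matrix (Fin (n + 1)) (Fin (n + 1)) R) :
    superdiagonal (M - 1) = superdiagonal M :=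
  (congrArg (superdiagonal M - ·) superdiagonal_one).trans (sub_zero _)

lemma superdiagonal_mul [Ring R] {M N : Matrix (Fin (n + 1)) (Fin (n + 1)) R}
    (hM : VanishesBelowDiagonal 1 (M - 1)) (hN : VanishesBelowDiagonal 1 (N - 1)) :
    superdiagonal (M * N) = superdiagonal M + superdiagonal N := by
  ext i
  have hprod : ((M - 1) * (N - 1)) i.castSucc i.succ = 0 := hM.mul hN (by simp)
  have hexpand : M * N = (M - 1) * (N - 1) + M + N - 1 := by noncomm_ring
  simp [superdiagonal, hexpand, hprod, one_apply_ne Fin.castSucc_lt_succ.ne]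

lemma superdiagonal_inv [CommRing R] {g : GL (Fin (n + 1)) R}
    (hg : g ∈ unitriangularSubgroup (n + 1) R) :
    superdiagonal (g⁻¹ : GL (Fin (n + 1)) R).val = -superdiagonal g := by
  have hmul := superdiagonal_mul (inv_mem hg) hg
  rw [Units.inv_mul, superdiagonal_one] at hmul
  exact eq_neg_of_add_eq_zero_left hmul.symm

end Superdiagonal

section AlternatingSign

variable {R : Type*} [CommRing R] {n : ℕ}

/-- The involution `diag(1, -1, 1, …)`, conjugation by which negates the superdiagonal. -/
def alternatingSign (n : ℕ) (R : Type*) [CommRing R] : GL (Fin n) R where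
  val := diagonal fun i ↦ (-1) ^ (i : ℕ)
  inv := diagonal fun i ↦ (-1) ^ (i : ℕ)
  val_inv := by simp [diagonal_mul_diagonal, ← mul_pow]
  inv_val := by simp [diagonal_mul_diagonal, ← mul_pow]

lemma alternatingSign_mul_self : alternatingSign n R * alternatingSign n R = 1 :=
  Units.ext (alternatingSign n R).val_inv

lemma alternatingSign_mem_upperTriangularSubgroup :
    alternatingSign n R ∈ upperTriangularSubgroup n R :=
  blockTriangular_diagonal _

lemma superdiagonal_alternatingSign_conj (w : GL (Fin (n + 1)) R) :
    superdiagonal (alternatingSign (n + 1) R * w * (alternatingSign (n + 1) R)⁻¹).val =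
      -superdiagonal w := by
  ext i
  rw [inv_eq_of_mul_eq_one_left alternatingSign_mul_self]
  simp only [superdiagonal, alternatingSign, Units.val_mul, diagonal_mul, mul_diagonal,
    Fin.val_castSucc, Fin.val_succ, Pi.neg_apply]
  rw [mul_right_comm, ← pow_add, Odd.neg_one_pow ⟨i, by ring⟩, neg_one_mul]

lemma exists_isInvolutionCommutator_superdiagonal_eq [Invertible (2 : R)] (k : Fin n → R) :
    ∃ x ∈ unitriangularSubgroup (n + 1) R,
      IsInvolutionCommutator (upperTriangularSubgroup (n + 1) R) x ∧ superdiagonal x.val = k := by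
  obtain ⟨w, hw, hw_eq⟩ := VanishesBelowDiagonal.exists_mem_unitriangularSubgroup
    (M := 1 + superdiagonalMatrix fun i ↦ -(⅟2 * ⅟2 * k i))
    (by simpa using vanishesBelowDiagonal_superdiagonalMatrix _)
  let s := alternatingSign (n + 1) R
  have hs : s ∈ upperTriangularSubgroup (n + 1) R := alternatingSign_mem_upperTriangularSubgroup
  have hsw : s * w * s⁻¹ ∈ unitriangularSubgroup (n + 1) R := conj_mem_unitriangularSubgroup hs hw
  have hcomm : ⁅s, w⁆ ∈ unitriangularSubgroup (n + 1) R := mul_mem hsw (inv_mem hw)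
  have hsuper : superdiagonal ⁅s, w⁆.val = -superdiagonal w.val - superdiagonal w.val := by
    rw [commutatorElement_def, Units.val_mul, superdiagonal_mul hsw (inv_mem hw),
      superdiagonal_alternatingSign_conj, superdiagonal_inv hw, sub_eq_add_neg]
  refine ⟨⁅s, w⁆ * ⁅s, w⁆, mul_mem hcomm hcomm,
    isInvolutionCommutator_commutatorElement_mul_self hs
      (unitriangularSubgroup_le_upperTriangularSubgroup hw) alternatingSign_mul_self, ?_⟩
  rw [Units.val_mul, superdiagonal_mul hcomm hcomm, hsuper, hw_eq,
    superdiagonal_one_add_superdiagonalMatrix]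
  ext i
  simp only [Pi.add_apply, Pi.sub_apply, Pi.neg_apply]
  linear_combination k i * (1 + 2 * ⅟(2 : R)) * mul_invOf_self (2 : R)

end AlternatingSign

section Jordan

variable {R : Type*} {n : ℕ}

lemma VanishesBelowDiagonal.pow_apply_of_superdiagonal_eq_one [Semiring R]
    {N : Matrix (Fin (n + 1)) (Fin (n + 1)) R} (hN : VanishesBelowDiagonal 1 N)
    (hsuper : superdiagonal N = 1) {e : ℕ} {i j : Fin (n + 1)} (hij : (j : ℕ) = i + e) :
    (N ^ e) i j = 1 := by
  induction e generalizing i with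
  | zero => simp [Fin.ext (hij : (j : ℕ) = i)]
  | succ e ih =>
    have hi : i ≠ Fin.last n := Fin.ne_of_lt (Fin.lt_def.mpr (by simp only [Fin.val_last]; lia))
    obtain ⟨i, rfl⟩ := Fin.exists_castSucc_eq.mpr hi
    have hij' : (j : ℕ) = i.succ + e := by
      simp only [Fin.val_castSucc, Fin.val_succ] at hij ⊢
      lia
    rw [pow_succ', hN.mul_apply_of_eq_add (hN.pow e) (p := i.succ) (by simp) (by simpa using hij'),
      ih hij', mul_one]
    exact congrFun hsuper i

/-- The matrix with columns `N ^ n v, …, N v, v`, where `v` is the last standard basis vector: the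
basis in which a regular nilpotent `N` becomes a Jordan block. -/
def cyclicBasisMatrix [Semiring R] (N : Matrix (Fin (n + 1)) (Fin (n + 1)) R) :
    Matrix (Fin (n + 1)) (Fin (n + 1)) R :=
  of fun i j ↦ (N ^ (j.rev : ℕ)) i (Fin.last n)

lemma mul_cyclicBasisMatrix [Semiring R] {N : Matrix (Fin (n + 1)) (Fin (n + 1)) R}
    (hN : N ^ (n + 1) = 0) :
    N * cyclicBasisMatrix N = cyclicBasisMatrix N * superdiagonalMatrix 1 := by
  ext i j
  have hcol : (N * cyclicBasisMatrix N) i j = (N ^ ((j.rev : ℕ) + 1)) i (Fin.last n) := by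
    rw [pow_succ', mul_apply, mul_apply]
    rfl
  rw [hcol]
  cases j using Fin.cases with
  | zero => simp [mul_superdiagonalMatrix_apply_zero, hN]
  | succ j =>
    rw [mul_superdiagonalMatrix_apply_succ, Pi.one_apply, mul_one, cyclicBasisMatrix, of_apply,
      Fin.rev_succ, Fin.rev_castSucc, Fin.val_castSucc, Fin.val_succ]

lemma VanishesBelowDiagonal.cyclicBasisMatrix_sub_one [Ring R]
    {N : Matrix (Fin (n + 1)) (Fin (n + 1)) R} (hN : VanishesBelowDiagonal 1 N)
    (hsuper : superdiagonal N = 1) : VanishesBelowDiagonal 1 (cyclicBasisMatrix N - 1) := by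
  rw [vanishesBelowDiagonal_sub_one_iff]
  refine ⟨fun i j hij ↦ hN.pow _ ?_, fun i ↦ hN.pow_apply_of_superdiagonal_eq_one hsuper ?_⟩
  · have hij' : j < i := hij
    simp only [Fin.val_last, Fin.val_rev]
    lia
  · simp only [Fin.val_last, Fin.val_rev]
    lia

variable [CommRing R]

lemma exists_conj_eq_one_add_superdiagonalMatrix {y : GL (Fin (n + 1)) R}
    (hy : y ∈ unitriangularSubgroup (n + 1) R) (hsuper : superdiagonal y.val = 1) :
    ∃ u ∈ unitriangularSubgroup (n + 1) R, (u⁻¹ * y * u).val = 1 + superdiagonalMatrix 1 := by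
  have hN : VanishesBelowDiagonal 1 (y.val - 1) := hy
  have hN_super : superdiagonal (y.val - 1) = 1 := (superdiagonal_sub_one y.val).trans hsuper
  have hN_pow : (y.val - 1) ^ (n + 1) = 0 := by
    ext i j
    exact hN.pow _ (by lia)
  obtain ⟨u, hu, hu_eq⟩ := (hN.cyclicBasisMatrix_sub_one hN_super).exists_mem_unitriangularSubgroup
  have hyu : (y.val - 1) * u.val = u.val * superdiagonalMatrix 1 := by
    rw [hu_eq, mul_cyclicBasisMatrix hN_pow]
  refine ⟨u, hu, ?_⟩
  calc (u⁻¹ * y * u).val = u⁻¹.val * (u.val + (y.val - 1) * u.val) := by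
        rw [sub_mul, one_mul, add_sub_cancel, Units.val_mul, Units.val_mul, mul_assoc]
    _ = 1 + superdiagonalMatrix 1 := by
        rw [hyu, mul_add, Units.inv_mul, Units.inv_mul_cancel_left]

lemma exists_conj_eq_of_superdiagonal_eq_one {y z : GL (Fin (n + 1)) R}
    (hy : y ∈ unitriangularSubgroup (n + 1) R) (hy_super : superdiagonal y.val = 1)
    (hz : z ∈ unitriangularSubgroup (n + 1) R) (hz_super : superdiagonal z.val = 1) :
    ∃ u ∈ unitriangularSubgroup (n + 1) R, u * z * u⁻¹ = y := by
  obtain ⟨u, hu, hyu⟩ := exists_conj_eq_one_add_superdiagonalMatrix hy hy_super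
  obtain ⟨v, hv, hzv⟩ := exists_conj_eq_one_add_superdiagonalMatrix hz hz_super
  have hconj : v⁻¹ * z * v = u⁻¹ * y * u := Units.ext (hzv.trans hyu.symm)
  refine ⟨u * v⁻¹, mul_mem hu (inv_mem hv), ?_⟩
  calc u * v⁻¹ * z * (u * v⁻¹)⁻¹ = u * (v⁻¹ * z * v) * u⁻¹ := by group
    _ = y := by rw [hconj]; group

end Jordan

lemma exists_isInvolutionCommutator_mul_eq {R : Type*} [CommRing R] [Invertible (2 : R)] {n : ℕ}
    {a : GL (Fin (n + 1)) R} (ha : a ∈ unitriangularSubgroup (n + 1) R) :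
    ∃ x y, IsInvolutionCommutator (upperTriangularSubgroup (n + 1) R) x ∧
      IsInvolutionCommutator (upperTriangularSubgroup (n + 1) R) y ∧ x * y = a := by
  obtain ⟨x, hx, hx_comm, hx_super⟩ :=
    exists_isInvolutionCommutator_superdiagonal_eq (superdiagonal a.val - 1)
  obtain ⟨z, hz, hz_comm, hz_super⟩ :=
    exists_isInvolutionCommutator_superdiagonal_eq (1 : Fin n → R)
  have hxa_super : superdiagonal (x⁻¹ * a).val = 1 := by
    rw [Units.val_mul, superdiagonal_mul (inv_mem hx) ha, superdiagonal_inv hx, hx_super]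
    abel
  obtain ⟨u, hu, hconj⟩ :=
    exists_conj_eq_of_superdiagonal_eq_one (mul_mem (inv_mem hx) ha) hxa_super hz hz_super
  refine ⟨x, x⁻¹ * a, hx_comm, ?_, mul_inv_cancel_left x a⟩
  exact hconj ▸ hz_comm.conj (unitriangularSubgroup_le_upperTriangularSubgroup hu)

theorem stmt_13 {R : Type*} [CommRing R] [Invertible (2 : R)] (n : ℕ) (hn : 2 ≤ n)
    (A : Matrix (Fin n) (Fin n) R)
    (hAut : A.BlockTriangular id) (hAdiag : ∀ i, A i i = 1) :
    ∃ B₁ C₁ B₂ C₂ : Matrix (Fin n) (Fin n) R,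
      B₁ * B₁ = 1 ∧ C₁ * C₁ = 1 ∧ B₂ * B₂ = 1 ∧ C₂ * C₂ = 1 ∧
      B₁.BlockTriangular id ∧ C₁.BlockTriangular id ∧
      B₂.BlockTriangular id ∧ C₂.BlockTriangular id ∧
      A = (B₁ * C₁ * B₁⁻¹ * C₁⁻¹) * (B₂ * C₂ * B₂⁻¹ * C₂⁻¹) := by
  obtain ⟨m, rfl⟩ : ∃ m, n = m + 1 := Nat.exists_eq_succ_of_ne_zero (by lia)
  obtain ⟨a, ha, rfl⟩ := VanishesBelowDiagonal.exists_mem_unitriangularSubgroup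
    (vanishesBelowDiagonal_sub_one_iff.mpr ⟨hAut, hAdiag⟩)
  obtain ⟨_, _, ⟨b₁, hb₁, c₁, hc₁, hbb₁, hcc₁, rfl⟩, ⟨b₂, hb₂, c₂, hc₂, hbb₂, hcc₂, rfl⟩, rfl⟩ :=
    exists_isInvolutionCommutator_mul_eq ha
  refine ⟨b₁, c₁, b₂, c₂, congrArg Units.val hbb₁, congrArg Units.val hcc₁,
    congrArg Units.val hbb₂, congrArg Units.val hcc₂, hb₁, hc₁, hb₂, hc₂, ?_⟩
  simp only [commutatorElement_def, Units.val_mul, coe_units_inv]
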